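/- Fix positive reals p₋₁, p₀, p₁ and let P(1) = p₋₁ + p₀ + p₁. Let b_{n,k} denote the total weight of Motzkin bridges of length n having exactly k sign changes, let e_n denote the total weight of positive excursions of length n, E(z) = Σ_{n≥0} e_n zⁿ, C(z) = 1/(1 − p₀z), and E₁(z) = E(z)/C(z) − 1. Then for all real z with 0 < z < 1/P(1) and all real u with 0 ≤ u ≤ 1: 0 ≤ u·E₁(z) < 1 and Σ_{n≥0} zⁿ (Σ_{k≥0} b_{n,k} u^k) = C(z) · (1 + 2E₁(z)/(1 − u·E₁(z))). -/

import Mathlib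

open scoped BigOperators Classical

/-- Value of a step encoded by `Fin 3`: `0 ↦ -1`, `1 ↦ 0`, `2 ↦ +1`. -/
def stepVal (s : Fin 3) : ℤ := (s : ℤ) - 1

/-- Weight of a single step: `p₋₁` for `-1`, `p₀` for `0`, `p₁` for `+1`. -/
def stepWeight (pm p0 p1 : ℝ) (s : Fin 3) : ℝ :=
  if s = 0 then pm else if s = 1 then p0 else p1

/-- Weight of a Motzkin walk (product of its step weights). -/
def walkWeight (pm p0 p1 : ℝ) {n : ℕ} (w : Fin n → Fin 3) : ℝ :=
  ∏ i, stepWeight pm p0 p1 (w i)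

/-- Partial sum `ω_j` of the walk `w`. -/
def psum {n : ℕ} (w : Fin n → Fin 3) (j : ℕ) : ℤ :=
  ∑ i ∈ Finset.univ.filter (fun i : Fin n => (i : ℕ) < j), stepVal (w i)

/-- Total weight of Motzkin bridges of length `n`. -/
noncomputable def bridgeW (pm p0 p1 : ℝ) (n : ℕ) : ℝ :=
  ∑ w ∈ Finset.univ.filter (fun w : Fin n → Fin 3 => psum w n = 0),
    walkWeight pm p0 p1 w

/-- Number of returns to zero of a walk of length `n`. -/
def retZero {n : ℕ} (w : Fin n → Fin 3) : ℕ :=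
  ((Finset.Icc 1 n).filter (fun j => psum w j = 0)).card

/-- Total weight of walks of length `n` with exactly `k` returns to zero. -/
noncomputable def walkRetW (pm p0 p1 : ℝ) (n k : ℕ) : ℝ :=
  ∑ w ∈ Finset.univ.filter (fun w : Fin n → Fin 3 => retZero w = k),
    walkWeight pm p0 p1 w

/-- Number of sign changes of a walk of length `n`. -/
def signChanges {n : ℕ} (w : Fin n → Fin 3) : ℕ :=
  (((Finset.range (n+1)) ×ˢ (Finset.range (n+1))).filter
    (fun p => p.1 < p.2 ∧ psum w p.1 * psum w p.2 < 0 ∧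
      ∀ l ∈ Finset.Ioo p.1 p.2, psum w l = 0)).card

/-- Total weight of bridges of length `n` with exactly `k` sign changes. -/
noncomputable def bridgeSignW (pm p0 p1 : ℝ) (n k : ℕ) : ℝ :=
  ∑ w ∈ Finset.univ.filter
      (fun w : Fin n → Fin 3 => psum w n = 0 ∧ signChanges w = k),
    walkWeight pm p0 p1 w

/-- Total weight of positive excursions of length `n`. -/
noncomputable def posExcW (pm p0 p1 : ℝ) (n : ℕ) : ℝ :=
  ∑ w ∈ Finset.univ.filter
      (fun w : Fin n → Fin 3 => psum w n = 0 ∧ ∀ j ∈ Finset.range (n+1), 0 ≤ psum w j),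
    walkWeight pm p0 p1 w

/-- Total weight of negative excursions of length `n`. -/
noncomputable def negExcW (pm p0 p1 : ℝ) (n : ℕ) : ℝ :=
  ∑ w ∈ Finset.univ.filter
      (fun w : Fin n → Fin 3 => psum w n = 0 ∧ ∀ j ∈ Finset.range (n+1), psum w j ≤ 0),
    walkWeight pm p0 p1 w

/-- A positive bridge: a bridge whose last nonzero partial sum is positive. -/
def IsPosBridge {n : ℕ} (w : Fin n → Fin 3) : Prop :=
  psum w n = 0 ∧ ∃ j ∈ Finset.range (n+1),
    0 < psum w j ∧ ∀ l ∈ Finset.Ioc j n, psum w l = 0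

/-- A negative bridge: a bridge whose last nonzero partial sum is negative. -/
def IsNegBridge {n : ℕ} (w : Fin n → Fin 3) : Prop :=
  psum w n = 0 ∧ ∃ j ∈ Finset.range (n+1),
    psum w j < 0 ∧ ∀ l ∈ Finset.Ioc j n, psum w l = 0

instance {n : ℕ} (w : Fin n → Fin 3) : Decidable (IsPosBridge w) := by
  unfold IsPosBridge; infer_instance

instance {n : ℕ} (w : Fin n → Fin 3) : Decidable (IsNegBridge w) := by
  unfold IsNegBridge; infer_instance

/-- Total weight of positive bridges of length `n` with `k` sign changes. -/
noncomputable def posBridgeSignW (pm p0 p1 : ℝ) (n k : ℕ) : ℝ :=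
  ∑ w ∈ Finset.univ.filter
      (fun w : Fin n → Fin 3 => IsPosBridge w ∧ signChanges w = k),
    walkWeight pm p0 p1 w

/-- Total weight of negative bridges of length `n` with `k` sign changes. -/
noncomputable def negBridgeSignW (pm p0 p1 : ℝ) (n k : ℕ) : ℝ :=
  ∑ w ∈ Finset.univ.filter
      (fun w : Fin n → Fin 3 => IsNegBridge w ∧ signChanges w = k),
    walkWeight pm p0 p1 w

/-- Total weight of walks of length `n` with `k` sign changes. -/
noncomputable def walkSignW (pm p0 p1 : ℝ) (n k : ℕ) : ℝ :=
  ∑ w ∈ Finset.univ.filter (fun w : Fin n → Fin 3 => signChanges w = k),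
    walkWeight pm p0 p1 w

/-- Height of a walk of length `n` (as a natural number; it is `max_j ω_j ≥ 0`). -/
def height {n : ℕ} (w : Fin n → Fin 3) : ℕ :=
  (Finset.range (n+1)).sup (fun j => (psum w j).toNat)

/-- Total weight of walks of length `n` of height exactly `h`. -/
noncomputable def heightW (pm p0 p1 : ℝ) (n h : ℕ) : ℝ :=
  ∑ w ∈ Finset.univ.filter (fun w : Fin n → Fin 3 => height w = h),
    walkWeight pm p0 p1 w

/-- Partial sums of a family satisfying a first-step recursion converge to any bounded solution
of the associated fixed-point equation. -/
lemma hasSum_of_firstStep {S : Type*} (z : ℝ) (hz : 0 ≤ z) (p : Fin 3 → ℝ) (hp : ∀ s, 0 ≤ p s)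
    (hρ : z * ∑ s, p s < 1) (κ : S → ℝ) (hκ : ∀ x, |κ x| ≤ 1) (nxt : S → Fin 3 → S)
    (start X : S → ℝ) (M : ℝ) (hM : ∀ x, |X x| ≤ M) (f : ℕ → S → ℝ) (hf : ∀ n x, 0 ≤ f n x)
    (hf_zero : ∀ x, f 0 x = start x)
    (hf_succ : ∀ n x, f (n + 1) x = κ x * ∑ s, p s * f n (nxt x s))
    (hX : ∀ x, X x = start x + κ x * (z * ∑ s, p s * X (nxt x s))) (x : S) :
    HasSum (fun n => f n x * z ^ n) (X x) := by
  have hρ_nonneg : 0 ≤ z * ∑ s, p s := mul_nonneg hz (Finset.sum_nonneg fun s _ => hp s)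
  have partial_succ : ∀ N x, ∑ n ∈ Finset.range (N + 1), f n x * z ^ n =
      start x + κ x * (z * ∑ s, p s * ∑ n ∈ Finset.range N, f n (nxt x s) * z ^ n) := by
    intro N x
    rw [Finset.sum_range_succ', hf_zero]
    simp only [hf_succ, Finset.mul_sum, Finset.sum_mul]
    rw [Finset.sum_comm, pow_zero, mul_one, add_comm]
    congr 1
    refine Finset.sum_congr rfl fun s _ => Finset.sum_congr rfl fun n _ => ?_
    ring
  have bound : ∀ N x,
      |X x - ∑ n ∈ Finset.range N, f n x * z ^ n| ≤ M * (z * ∑ s, p s) ^ N := by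
    intro N
    induction N with
    | zero => intro x; simpa using hM x
    | succ N ih =>
      intro x
      have hdiff : X x - ∑ n ∈ Finset.range (N + 1), f n x * z ^ n = κ x * (z * ∑ s, p s *
          (X (nxt x s) - ∑ n ∈ Finset.range N, f n (nxt x s) * z ^ n)) := by
        rw [partial_succ, hX x]
        simp only [mul_sub, Finset.sum_sub_distrib]
        ring
      have hsum : |∑ s, p s * (X (nxt x s) - ∑ n ∈ Finset.range N, f n (nxt x s) * z ^ n)| ≤
          ∑ s, p s * (M * (z * ∑ s, p s) ^ N) := by
        refine (Finset.abs_sum_le_sum_abs _ _).trans (Finset.sum_le_sum fun s _ => ?_)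
        rw [abs_mul, abs_of_nonneg (hp s)]
        exact mul_le_mul_of_nonneg_left (ih _) (hp s)
      rw [hdiff, abs_mul, abs_mul, abs_of_nonneg hz]
      calc _ ≤ 1 * (z * ∑ s, p s * (M * (z * ∑ s, p s) ^ N)) := by
            gcongr
            exact hκ x
        _ = M * (z * ∑ s, p s) ^ (N + 1) := by
            rw [← Finset.sum_mul]; ring
  rw [hasSum_iff_tendsto_nat_of_nonneg fun n => mul_nonneg (hf n x) (pow_nonneg hz n)]
  have hlim : Filter.Tendsto (fun N => M * (z * ∑ s, p s) ^ N) Filter.atTop (nhds 0) := by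
    simpa using (tendsto_pow_atTop_nhds_zero_of_lt_one hρ_nonneg hρ).const_mul M
  rw [tendsto_iff_dist_tendsto_zero]
  refine squeeze_zero (fun _ => dist_nonneg) (fun N => ?_) hlim
  rw [dist_comm, Real.dist_eq]
  exact bound N x

lemma psum_zero {n : ℕ} (w : Fin n → Fin 3) : psum w 0 = 0 := by
  simp [psum]

lemma psum_cons_succ {n : ℕ} (s : Fin 3) (w : Fin n → Fin 3) (j : ℕ) :
    psum (Fin.cons s w : Fin (n + 1) → Fin 3) (j + 1) = stepVal s + psum w j := by
  simp [psum, Finset.sum_filter, Fin.sum_univ_succ]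

lemma stepWeight_nonneg {pm p0 p1 : ℝ} (hpm : 0 ≤ pm) (hp0 : 0 ≤ p0) (hp1 : 0 ≤ p1) (s : Fin 3) :
    0 ≤ stepWeight pm p0 p1 s := by
  unfold stepWeight
  split_ifs <;> assumption

lemma walkWeight_nonneg {pm p0 p1 : ℝ} (hpm : 0 ≤ pm) (hp0 : 0 ≤ p0) (hp1 : 0 ≤ p1)
    {n : ℕ} (w : Fin n → Fin 3) : 0 ≤ walkWeight pm p0 p1 w :=
  Finset.prod_nonneg fun _ _ => stepWeight_nonneg hpm hp0 hp1 _

lemma walkWeight_cons (pm p0 p1 : ℝ) {n : ℕ} (s : Fin 3) (w : Fin n → Fin 3) :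
    walkWeight pm p0 p1 (Fin.cons s w : Fin (n + 1) → Fin 3) =
      stepWeight pm p0 p1 s * walkWeight pm p0 p1 w := by
  simp [walkWeight, Fin.prod_univ_succ]

lemma sum_stepWeight_mul (pm p0 p1 : ℝ) (g : Fin 3 → ℝ) :
    ∑ s, stepWeight pm p0 p1 s * g s = pm * g 0 + p0 * g 1 + p1 * g 2 := by
  simp [Fin.sum_univ_three, stepWeight]

/-- A multiplicative first-step decomposition of a statistic yields one for its weighted sum. -/
lemma sum_walkWeight_succ {S : Type*} (pm p0 p1 : ℝ) (κ : S → ℝ) (nxt : S → Fin 3 → S)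
    (Φ : ∀ n : ℕ, S → (Fin n → Fin 3) → ℝ)
    (hΦ : ∀ n x s w, Φ (n + 1) x (Fin.cons s w) = κ x * Φ n (nxt x s) w) (n : ℕ) (x : S) :
    ∑ w, walkWeight pm p0 p1 w * Φ (n + 1) x w =
      κ x * ∑ s, stepWeight pm p0 p1 s * ∑ w, walkWeight pm p0 p1 w * Φ n (nxt x s) w := by
  rw [← (Fin.consEquiv fun _ : Fin (n + 1) => Fin 3).sum_comp, Fintype.sum_prod_type]
  simp only [Finset.mul_sum, Fin.consEquiv, Equiv.coe_fn_mk, hΦ, walkWeight_cons]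
  refine Finset.sum_congr rfl fun s _ => Finset.sum_congr rfl fun w _ => ?_
  ring

/-- Number of sign changes of the integer sequence `a 0, …, a m`. -/
def seqSignChanges (a : ℕ → ℤ) (m : ℕ) : ℕ :=
  (((Finset.range (m + 1)) ×ˢ (Finset.range (m + 1))).filter
    (fun p => p.1 < p.2 ∧ a p.1 * a p.2 < 0 ∧ ∀ l ∈ Finset.Ioo p.1 p.2, a l = 0)).card

/-- Indicator that the first nonzero value among `a 0, …, a m` has sign opposite to `c`. -/
noncomputable def firstOpposite (c : ℤ) (a : ℕ → ℤ) (m : ℕ) : ℕ :=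
  if ∃ j ≤ m, c * a j < 0 ∧ ∀ l < j, a l = 0 then 1 else 0

/-- Number of sign changes of the sequence `c, a 0, …, a m`. -/
noncomputable def signChangesFrom (c : ℤ) (a : ℕ → ℤ) (m : ℕ) : ℕ :=
  firstOpposite c a m + seqSignChanges a m

lemma seqSignChanges_zero (a : ℕ → ℤ) : seqSignChanges a 0 = 0 := by
  simp [seqSignChanges, Finset.filter_singleton]

lemma firstOpposite_zero_left (a : ℕ → ℤ) (m : ℕ) : firstOpposite 0 a m = 0 := by
  simp [firstOpposite]

lemma firstOpposite_eq_sum (c : ℤ) (a : ℕ → ℤ) (m : ℕ) :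
    firstOpposite c a m =
      ∑ j ∈ Finset.range (m + 1), if c * a j < 0 ∧ ∀ l < j, a l = 0 then 1 else 0 := by
  unfold firstOpposite
  split_ifs with h
  · obtain ⟨j, hj, hneg, hzero⟩ := h
    rw [Finset.sum_eq_single j]
    · rw [if_pos ⟨hneg, hzero⟩]
    · rintro i - hij
      rw [if_neg]
      rintro ⟨hneg', hzero'⟩
      rcases lt_or_gt_of_ne hij with h | h
      · simp [hzero i h] at hneg'
      · simp [hzero' j h] at hneg
    · intro h
      exact absurd (Finset.mem_range.2 (by omega)) h
  · symm
    refine Finset.sum_eq_zero fun j hj => if_neg fun hj' => h ⟨j, ?_, hj'⟩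
    have := Finset.mem_range.1 hj
    omega

lemma seqSignChanges_succ (a : ℕ → ℤ) (m : ℕ) :
    seqSignChanges a (m + 1) = signChangesFrom (a 0) (fun j => a (j + 1)) m := by
  have shift_zero : ∀ j, (∀ l ∈ Finset.Ioo 0 (j + 1), a l = 0) ↔ ∀ l < j, a (l + 1) = 0 := by
    intro j
    constructor
    · intro h l hl
      exact h _ (Finset.mem_Ioo.2 (by omega))
    · intro h l hl
      obtain ⟨h1, h2⟩ := Finset.mem_Ioo.1 hl
      obtain ⟨l, rfl⟩ := Nat.exists_eq_add_of_lt h1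
      simpa using h l (by omega)
  have shift_succ : ∀ i j, (∀ l ∈ Finset.Ioo (i + 1) (j + 1), a l = 0) ↔
      ∀ l ∈ Finset.Ioo i j, a (l + 1) = 0 := by
    intro i j
    constructor
    · intro h l hl
      have := Finset.mem_Ioo.1 hl
      exact h _ (Finset.mem_Ioo.2 (by omega))
    · intro h l hl
      have hl' := Finset.mem_Ioo.1 hl
      obtain ⟨l, rfl⟩ := Nat.exists_eq_add_of_lt (show 0 < l by omega)
      simpa using h l (Finset.mem_Ioo.2 (by omega))
  rw [signChangesFrom, firstOpposite_eq_sum, seqSignChanges, seqSignChanges,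
    Finset.card_filter, Finset.card_filter, Finset.sum_product, Finset.sum_product,
    Finset.sum_range_succ', add_comm]
  congr 1
  · rw [Finset.sum_range_succ']
    simp only [shift_zero]
    simp
  · refine Finset.sum_congr rfl fun i _ => ?_
    rw [Finset.sum_range_succ']
    simp only [shift_succ, add_lt_add_iff_right]
    simp

lemma firstOpposite_succ (c : ℤ) (a : ℕ → ℤ) (m : ℕ) :
    firstOpposite c a (m + 1) =
      if a 0 = 0 then firstOpposite c (fun j => a (j + 1)) m
      else if c * a 0 < 0 then 1 else 0 := by
  rw [firstOpposite_eq_sum, Finset.sum_range_succ']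
  simp only [Nat.forall_lt_succ_left']
  by_cases h0 : a 0 = 0
  · rw [firstOpposite_eq_sum]
    simp [h0]
  · simp [h0]

lemma signChangesFrom_succ (c : ℤ) (a : ℕ → ℤ) (m : ℕ) :
    signChangesFrom c a (m + 1) = (if c * a 0 < 0 then 1 else 0) +
      signChangesFrom (if a 0 = 0 then c else a 0) (fun j => a (j + 1)) m := by
  rw [signChangesFrom, seqSignChanges_succ, firstOpposite_succ]
  split_ifs with h0 hneg
  · simp [h0] at hneg
  · simp [h0, signChangesFrom, firstOpposite_zero_left]
  · rfl
  · rfl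

lemma signChanges_eq_signChangesFrom {n : ℕ} (w : Fin n → Fin 3) :
    signChanges w = signChangesFrom 0 (fun j => 0 + psum w j) n := by
  simp [signChangesFrom, firstOpposite_zero_left, signChanges, seqSignChanges]

/-- Indicator that a walk started at height `h` stays nonnegative and ends at `0`. -/
noncomputable def excIndicator (n : ℕ) (h : ℤ) (w : Fin n → Fin 3) : ℝ :=
  if h + psum w n = 0 ∧ ∀ j ∈ Finset.range (n + 1), 0 ≤ h + psum w j then 1 else 0

lemma excIndicator_cons (n : ℕ) (h : ℤ) (s : Fin 3) (w : Fin n → Fin 3) :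
    excIndicator (n + 1) h (Fin.cons s w) =
      (if 0 ≤ h then 1 else 0) * excIndicator n (h + stepVal s) w := by
  have key : (∀ j ∈ Finset.range (n + 1 + 1),
      0 ≤ h + psum (Fin.cons s w : Fin (n + 1) → Fin 3) j) ↔
      0 ≤ h ∧ ∀ j ∈ Finset.range (n + 1), 0 ≤ h + stepVal s + psum w j := by
    simp only [Finset.mem_range]
    rw [Nat.forall_lt_succ_left']
    simp only [psum_zero, psum_cons_succ, add_zero, add_assoc]
  rw [excIndicator, excIndicator, key, psum_cons_succ, ← add_assoc, ite_zero_mul_ite_zero, one_mul]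
  congr 1
  simp only [eq_iff_iff]
  tauto

/-- For a walk started at height `h` after a value `c`: `u` to the number of sign changes if the
walk ends at `0`, and `0` otherwise. -/
noncomputable def bridgeMark (u : ℝ) (n : ℕ) (x : ℤ × ℤ) (w : Fin n → Fin 3) : ℝ :=
  if x.2 + psum w n = 0 then u ^ signChangesFrom x.1 (fun j => x.2 + psum w j) n else 0

lemma bridgeMark_cons (u : ℝ) (n : ℕ) (x : ℤ × ℤ) (s : Fin 3) (w : Fin n → Fin 3) :
    bridgeMark u (n + 1) x (Fin.cons s w) = (if x.1 * x.2 < 0 then u else 1) *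
      bridgeMark u n (if x.2 = 0 then x.1 else x.2, x.2 + stepVal s) w := by
  rw [bridgeMark, bridgeMark, signChangesFrom_succ]
  simp only [psum_zero, psum_cons_succ, add_zero, add_assoc, pow_add, mul_ite, mul_zero]
  congr 2
  split_ifs <;> simp

/-- The smaller root of the kernel `pm z - (1 - p0 z) r + p1 z r²`. -/
lemma exists_kernel_root {pm p0 p1 z : ℝ} (hpm : 0 < pm) (hp1 : 0 < p1)
    (hz : 0 < z) (hρ : z * (pm + p0 + p1) < 1) :
    ∃ r, 0 < r ∧ r < 1 ∧ z * pm + z * p0 * r + z * p1 * r ^ 2 = r ∧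
      2 * (z * p1 * r) < 1 - p0 * z ∧ p1 * r < pm := by
  have hcont : ContinuousOn (fun r : ℝ => r - (z * pm + z * p0 * r + z * p1 * r ^ 2))
      (Set.Icc 0 1) := by fun_prop
  have hpmz := mul_pos hz hpm
  have hp1z := mul_pos hz hp1
  obtain ⟨r, ⟨hr0, hr1⟩, hr⟩ := intermediate_value_Ioo zero_le_one hcont
    (show (0 : ℝ) ∈ Set.Ioo _ _ by constructor <;> norm_num <;> nlinarith)
  simp only at hr
  have hroot : z * pm + z * p0 * r + z * p1 * r ^ 2 = r := by linarith
  have hsmall : z * p1 * (1 + r) < 1 - p0 * z := by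
    have : 0 < (1 - r) * (1 - p0 * z - z * p1 * (1 + r)) := by
      nlinarith
    have := (mul_pos_iff_of_pos_left (by linarith)).1 this
    linarith
  refine ⟨r, hr0, hr1, hroot, by nlinarith, ?_⟩
  have : 0 < z * (pm - p1 * r) := by nlinarith
  linarith [(mul_pos_iff_of_pos_left hz).1 this]

lemma hasSum_posExcW {pm p0 p1 z r : ℝ} (hpm : 0 < pm) (hp0 : 0 < p0) (hp1 : 0 < p1)
    (hz : 0 < z) (hρ : z * (pm + p0 + p1) < 1) (hr0 : 0 < r) (hr1 : r < 1)
    (hroot : z * pm + z * p0 * r + z * p1 * r ^ 2 = r) (hsmall : z * p1 * r < 1 - p0 * z) :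
    HasSum (fun n => posExcW pm p0 p1 n * z ^ n) (1 / (1 - p0 * z - z * p1 * r)) := by
  set e := 1 / (1 - p0 * z - z * p1 * r) with he
  have he_pos : 0 < e := one_div_pos.2 (by linarith)
  have he_eq : e * (1 - p0 * z - z * p1 * r) = 1 := one_div_mul_cancel (by linarith)
  have key := hasSum_of_firstStep z hz.le (stepWeight pm p0 p1)
    (stepWeight_nonneg hpm.le hp0.le hp1.le) (by simpa [Fin.sum_univ_three, stepWeight] using hρ)
    (fun h : ℤ => if 0 ≤ h then 1 else 0) (by intro h; split_ifs <;> simp)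
    (fun h s => h + stepVal s) (fun h => if h = 0 then 1 else 0)
    (fun h => if 0 ≤ h then e * r ^ h.toNat else 0) e
    (by
      intro h
      split_ifs
      · rw [abs_of_nonneg (by positivity)]
        exact mul_le_of_le_one_right he_pos.le (pow_le_one₀ hr0.le hr1.le)
      · simpa using he_pos.le)
    (fun n h => ∑ w, walkWeight pm p0 p1 w * excIndicator n h w)
    (by
      intro n h
      refine Finset.sum_nonneg fun w _ =>
        mul_nonneg (walkWeight_nonneg hpm.le hp0.le hp1.le w) ?_
      unfold excIndicator
      split_ifs <;> norm_num)
    (by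
      intro h
      simp only [Fintype.sum_unique, walkWeight, excIndicator, psum_zero]
      by_cases h0 : h = 0 <;> simp [h0, psum_zero])
    (sum_walkWeight_succ pm p0 p1 _ _ excIndicator excIndicator_cons)
    (by
      intro h
      rw [sum_stepWeight_mul]
      rcases lt_trichotomy h 0 with hh | rfl | hh
      · simp [hh.not_ge, hh.ne]
      · simp [stepVal]
        linear_combination he_eq
      · obtain ⟨k, rfl⟩ : ∃ k : ℕ, h = k + 1 := ⟨(h - 1).toNat, by omega⟩
        have h1 : (0 : ℤ) ≤ k + 1 := hh.le
        have h2 : (0 : ℤ) ≤ k + 1 + 1 := by omega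
        have h3 : ((k : ℤ) + 1).toNat = k + 1 := by omega
        have h4 : ((k : ℤ) + 1 + 1).toNat = k + 2 := by omega
        simp [stepVal, h1, h2, h3, h4, hh.ne']
        linear_combination (-e * r ^ k) * hroot) 0
  convert key using 1
  · funext n
    simp [posExcW, excIndicator, Finset.sum_filter]
  · simp

/-- Total weight of bridges of length `n`, each marked by `u` to its number of sign changes. -/
noncomputable def markedBridgeW (pm p0 p1 u : ℝ) (n : ℕ) : ℝ :=
  ∑ w : Fin n → Fin 3, walkWeight pm p0 p1 w * bridgeMark u n (0, 0) w

lemma bridgeMark_nonneg {u : ℝ} (hu : 0 ≤ u) (n : ℕ) (x : ℤ × ℤ) (w : Fin n → Fin 3) :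
    0 ≤ bridgeMark u n x w := by
  unfold bridgeMark
  split_ifs
  · positivity
  · exact le_rfl

/-- Bounded solution of the first-step equations for marked bridges. -/
noncomputable def bridgeSolution (u r t β γ : ℝ) (x : ℤ × ℤ) : ℝ :=
  if x.2 = 0 then (if x.1 = 0 then γ else β)
  else (if x.1 * x.2 < 0 then u else 1) * (β * (if 0 < x.2 then r else t) ^ x.2.natAbs)

lemma bridgeSolution_of_pos (u r t β γ : ℝ) {c : ℤ} (hc : 0 < c) (k : ℕ) :
    bridgeSolution u r t β γ (c, k) = β * r ^ k := by
  rcases Nat.eq_zero_or_pos k with rfl | hk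
  · simp [bridgeSolution, hc.ne']
  · have hck : ¬ c * (k : ℤ) < 0 := not_lt.2 (by positivity)
    simp [bridgeSolution, hk, hk.ne', hck]

lemma bridgeSolution_of_neg (u r t β γ : ℝ) {c : ℤ} (hc : c < 0) (k : ℕ) :
    bridgeSolution u r t β γ (c, -k) = β * t ^ k := by
  rcases Nat.eq_zero_or_pos k with rfl | hk
  · simp [bridgeSolution, hc.ne]
  · have hck : ¬ c * -(k : ℤ) < 0 := not_lt.2 (mul_nonneg_of_nonpos_of_nonpos hc.le (by omega))
    have hk' : ¬ (0 : ℤ) < -(k : ℤ) := by omega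
    simp only [bridgeSolution, hk', hck]
    simp [hk.ne']

lemma bridgeSolution_eq {pm p0 p1 z r t u β γ : ℝ}
    (hroot : z * pm + z * p0 * r + z * p1 * r ^ 2 = r)
    (ht : pm * t = p1 * r) (hroot' : z * p1 + z * p0 * t + z * pm * t ^ 2 = t)
    (hβ : β * (1 - p0 * z - z * p1 * r - u * (z * p1 * r)) = 1)
    (hγ : γ * (1 - p0 * z) = 1 + 2 * (z * p1 * r) * β) (x : ℤ × ℤ) :
    bridgeSolution u r t β γ x = (if x.2 = 0 then 1 else 0) +
      (if x.1 * x.2 < 0 then u else 1) * (z * ∑ s, stepWeight pm p0 p1 s *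
        bridgeSolution u r t β γ (if x.2 = 0 then x.1 else x.2, x.2 + stepVal s)) := by
  obtain ⟨c, h⟩ := x
  rw [sum_stepWeight_mul]
  dsimp only
  rcases lt_trichotomy h 0 with hh | rfl | hh
  · obtain ⟨k, rfl⟩ : ∃ k : ℕ, h = -(k + 1) := ⟨(-h - 1).toNat, by omega⟩
    have hcur : bridgeSolution u r t β γ (c, -((k : ℤ) + 1)) =
        (if c * -((k : ℤ) + 1) < 0 then u else 1) * (β * t ^ (k + 1)) := by
      have habs : (-((k : ℤ) + 1)).natAbs = k + 1 := by omega
      simp only [bridgeSolution, hh.ne, hh.not_gt, habs, if_false]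
    have hdown := bridgeSolution_of_neg u r t β γ hh (k + 2)
    have hflat := bridgeSolution_of_neg u r t β γ hh (k + 1)
    have hup := bridgeSolution_of_neg u r t β γ hh k
    have e0 : -((k : ℤ) + 1) + stepVal 0 = -((k + 2 : ℕ) : ℤ) := by simp [stepVal]; ring
    have e1 : -((k : ℤ) + 1) + stepVal 1 = -((k + 1 : ℕ) : ℤ) := by simp [stepVal]
    have e2 : -((k : ℤ) + 1) + stepVal 2 = -(k : ℤ) := by simp [stepVal]
    rw [if_neg hh.ne, if_neg hh.ne, e0, e1, e2, hdown, hflat, hup, hcur]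
    linear_combination
      (-(if c * -((k : ℤ) + 1) < 0 then u else 1) * β * t ^ k) * hroot'
  · rcases lt_trichotomy c 0 with hc | rfl | hc
    · simp [bridgeSolution, stepVal, hc.ne, hc, hc.not_gt]
      linear_combination hβ - z * β * ht
    · simp [bridgeSolution, stepVal]
      linear_combination hγ - z * β * ht
    · simp [bridgeSolution, stepVal, hc.ne', hc, hc.not_gt]
      linear_combination hβ - z * u * β * ht
  · obtain ⟨k, rfl⟩ : ∃ k : ℕ, h = k + 1 := ⟨(h - 1).toNat, by omega⟩
    have hcur : bridgeSolution u r t β γ (c, (k : ℤ) + 1) =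
        (if c * ((k : ℤ) + 1) < 0 then u else 1) * (β * r ^ (k + 1)) := by
      have habs : ((k : ℤ) + 1).natAbs = k + 1 := by omega
      simp only [bridgeSolution, hh.ne', hh, habs, if_false, if_true]
    have hdown := bridgeSolution_of_pos u r t β γ hh k
    have hflat := bridgeSolution_of_pos u r t β γ hh (k + 1)
    have hup := bridgeSolution_of_pos u r t β γ hh (k + 2)
    have e0 : (k : ℤ) + 1 + stepVal 0 = (k : ℤ) := by simp [stepVal]
    have e1 : (k : ℤ) + 1 + stepVal 1 = ((k + 1 : ℕ) : ℤ) := by simp [stepVal]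
    have e2 : (k : ℤ) + 1 + stepVal 2 = ((k + 2 : ℕ) : ℤ) := by simp [stepVal]; ring
    rw [if_neg hh.ne', if_neg hh.ne', e0, e1, e2, hdown, hflat, hup, hcur]
    linear_combination
      (-(if c * ((k : ℤ) + 1) < 0 then u else 1) * β * r ^ k) * hroot

lemma abs_bridgeSolution_le {u r t β γ : ℝ} (hu0 : 0 ≤ u) (hu1 : u ≤ 1) (hr0 : 0 ≤ r) (hr1 : r ≤ 1)
    (ht0 : 0 ≤ t) (ht1 : t ≤ 1) (hβ : 0 ≤ β) (hγ : 0 ≤ γ) (x : ℤ × ℤ) :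
    |bridgeSolution u r t β γ x| ≤ β + γ := by
  have hpow : ∀ v : ℝ, 0 ≤ v → v ≤ 1 → ∀ m : ℕ, ∀ q : ℝ, 0 ≤ q → q ≤ 1 →
      |v * (β * q ^ m)| ≤ β + γ := by
    intro v hv0 hv1 m q hq0 hq1
    rw [abs_of_nonneg (by positivity)]
    have h1 : β * q ^ m ≤ β := mul_le_of_le_one_right hβ (pow_le_one₀ hq0 hq1)
    have h2 : v * (β * q ^ m) ≤ β * q ^ m := mul_le_of_le_one_left (by positivity) hv1
    linarith
  unfold bridgeSolution
  split_ifs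
  · rw [abs_of_nonneg hγ]; linarith
  · rw [abs_of_nonneg hβ]; linarith
  all_goals apply hpow <;> first | assumption | norm_num

lemma hasSum_markedBridgeW {pm p0 p1 z r u : ℝ} (hpm : 0 < pm) (hp0 : 0 < p0) (hp1 : 0 < p1)
    (hz : 0 < z) (hρ : z * (pm + p0 + p1) < 1) (hu0 : 0 ≤ u) (hu1 : u ≤ 1)
    (hr0 : 0 < r) (hr1 : r < 1)
    (hroot : z * pm + z * p0 * r + z * p1 * r ^ 2 = r)
    (hsmall : 2 * (z * p1 * r) < 1 - p0 * z) (hr_lt : p1 * r < pm) :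
    HasSum (fun n => markedBridgeW pm p0 p1 u n * z ^ n)
      ((1 + 2 * (z * p1 * r) * (1 / (1 - p0 * z - z * p1 * r - u * (z * p1 * r)))) /
        (1 - p0 * z)) := by
  have ha : 0 < z * p1 * r := by positivity
  have hden : 0 < 1 - p0 * z - z * p1 * r - u * (z * p1 * r) := by nlinarith
  have hden' : 0 < 1 - p0 * z := by linarith
  set β := 1 / (1 - p0 * z - z * p1 * r - u * (z * p1 * r)) with hβ_def
  set γ := (1 + 2 * (z * p1 * r) * β) / (1 - p0 * z) with hγ_def
  have hβ_pos : 0 < β := one_div_pos.2 hden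
  have hγ_pos : 0 < γ := by positivity
  have ht : pm * (p1 * r / pm) = p1 * r := by field_simp
  set t := p1 * r / pm with ht_def
  have ht0 : 0 ≤ t := by positivity
  have ht1 : t ≤ 1 := (div_le_one hpm).2 hr_lt.le
  have hroot' : z * p1 + z * p0 * t + z * pm * t ^ 2 = t := by
    refine mul_left_cancel₀ hpm.ne' ?_
    linear_combination p1 * hroot + (z * p0 + z * pm * t + z * p1 * r - 1) * ht
  have key := hasSum_of_firstStep z hz.le (stepWeight pm p0 p1)
    (stepWeight_nonneg hpm.le hp0.le hp1.le) (by simpa [Fin.sum_univ_three, stepWeight] using hρ)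
    (fun x : ℤ × ℤ => if x.1 * x.2 < 0 then u else 1)
    (by intro x; split_ifs <;> simp [abs_of_nonneg hu0, hu1])
    (fun x s => (if x.2 = 0 then x.1 else x.2, x.2 + stepVal s))
    (fun x => if x.2 = 0 then 1 else 0)
    (bridgeSolution u r t β γ) (β + γ)
    (abs_bridgeSolution_le hu0 hu1 hr0.le hr1.le ht0 ht1 hβ_pos.le hγ_pos.le)
    (fun n x => ∑ w, walkWeight pm p0 p1 w * bridgeMark u n x w)
    (fun n x => Finset.sum_nonneg fun w _ =>
      mul_nonneg (walkWeight_nonneg hpm.le hp0.le hp1.le w) (bridgeMark_nonneg hu0 n x w))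
    (by
      intro x
      simp only [Fintype.sum_unique, walkWeight, bridgeMark, psum_zero]
      by_cases h0 : x.2 = 0 <;>
        simp [h0, psum_zero, signChangesFrom, firstOpposite, seqSignChanges_zero])
    (sum_walkWeight_succ pm p0 p1 _ _ (bridgeMark u) (bridgeMark_cons u))
    (bridgeSolution_eq hroot ht hroot' (one_div_mul_cancel hden.ne')
      (div_mul_cancel₀ _ hden'.ne')) (0, 0)
  simpa [markedBridgeW, bridgeSolution] using key

lemma hasSum_bridgeSignW (pm p0 p1 u : ℝ) (n : ℕ) :
    HasSum (fun k => bridgeSignW pm p0 p1 n k * u ^ k) (markedBridgeW pm p0 p1 u n) := by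
  simp only [bridgeSignW, Finset.sum_filter, Finset.sum_mul, markedBridgeW]
  refine hasSum_sum fun w _ => ?_
  have hmark : bridgeMark u n (0, 0) w = if psum w n = 0 then u ^ signChanges w else 0 := by
    rw [bridgeMark, signChanges_eq_signChangesFrom, zero_add]
  convert hasSum_ite_eq (signChanges w) (walkWeight pm p0 p1 w * bridgeMark u n (0, 0) w)
    using 2 with k
  rw [hmark]
  by_cases hk : k = signChanges w
  · by_cases h0 : psum w n = 0 <;> simp [hk, h0]
  · simp [hk, Ne.symm hk]

/-- **Bivariate generating function of bridges by sign changes**: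
`B(z,u) = C(z)(1 + 2E₁(z)/(1 - uE₁(z)))`. -/
theorem bridges_sign_changes_gf (pm p0 p1 : ℝ)
    (hpm : 0 < pm) (hp0 : 0 < p0) (hp1 : 0 < p1) :
    let P1 : ℝ := pm + p0 + p1
    let E : ℝ → ℝ := fun z => ∑' n : ℕ, posExcW pm p0 p1 n * z ^ n
    let C : ℝ → ℝ := fun z => 1 / (1 - p0 * z)
    let E₁ : ℝ → ℝ := fun z => E z / C z - 1
    ∀ z : ℝ, 0 < z → z < 1 / P1 → ∀ u : ℝ, 0 ≤ u → u ≤ 1 →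
      Summable (fun n : ℕ => posExcW pm p0 p1 n * z ^ n) ∧
      0 ≤ u * E₁ z ∧ u * E₁ z < 1 ∧
      Summable (fun p : ℕ × ℕ => bridgeSignW pm p0 p1 p.1 p.2 * z ^ p.1 * u ^ p.2) ∧
      (∑' n : ℕ, z ^ n * ∑' k : ℕ, bridgeSignW pm p0 p1 n k * u ^ k) =
        C z * (1 + 2 * E₁ z / (1 - u * E₁ z)) := by
  intro P1 E C E₁ z hz hzP u hu0 hu1
  have hP1 : 0 < P1 := by positivity
  have hρ : z * (pm + p0 + p1) < 1 := (lt_div_iff₀ hP1).1 hzP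
  obtain ⟨r, hr0, hr1, hroot, hsmall, hr_lt⟩ := exists_kernel_root hpm hp1 hz hρ
  have ha : 0 < z * p1 * r := by positivity
  have hE := hasSum_posExcW hpm hp0 hp1 hz hρ hr0 hr1 hroot (by linarith)
  have hB := hasSum_markedBridgeW hpm hp0 hp1 hz hρ hu0 hu1 hr0 hr1 hroot hsmall hr_lt
  have hC : 0 < 1 - p0 * z := by linarith
  have hden : 0 < 1 - p0 * z - z * p1 * r := by linarith
  have hden_u : 0 < 1 - p0 * z - z * p1 * r - u * (z * p1 * r) := by nlinarith
  have hE₁ : E₁ z = z * p1 * r / (1 - p0 * z - z * p1 * r) := by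
    simp only [E₁, E, C, hE.tsum_eq]
    field_simp
    ring
  have hE₁_nonneg : 0 ≤ E₁ z := by rw [hE₁]; positivity
  have hE₁_lt : E₁ z < 1 := by rw [hE₁, div_lt_one hden]; linarith
  have hweight_nonneg : ∀ n k, 0 ≤ bridgeSignW pm p0 p1 n k := fun n k =>
    Finset.sum_nonneg fun w _ => walkWeight_nonneg hpm.le hp0.le hp1.le w
  have hrow : ∀ n, HasSum (fun k => bridgeSignW pm p0 p1 n k * z ^ n * u ^ k)
      (markedBridgeW pm p0 p1 u n * z ^ n) := fun n =>
    ((hasSum_bridgeSignW pm p0 p1 u n).mul_right (z ^ n)).congr_fun fun k => by ring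
  refine ⟨hE.summable, mul_nonneg hu0 hE₁_nonneg, by nlinarith, ?_, ?_⟩
  · rw [summable_prod_of_nonneg fun x => by
      have := hweight_nonneg x.1 x.2
      simp only [Pi.zero_apply]
      positivity]
    exact ⟨fun n => (hrow n).summable, by simpa only [(hrow _).tsum_eq] using hB.summable⟩
  · simp only [(hasSum_bridgeSignW pm p0 p1 u _).tsum_eq, mul_comm (z ^ _)]
    rw [hB.tsum_eq, hE₁]
    have hquot : ∀ a d : ℝ, d ≠ 0 →
        2 * (a / d) / (1 - u * (a / d)) = 2 * a * (1 / (d - u * a)) := by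
      intro a d hd
      have : 1 - u * (a / d) = (d - u * a) / d := by rw [sub_div, div_self hd, mul_div_assoc]
      rw [this, ← mul_div_assoc, div_div_div_cancel_right₀ hd, mul_one_div]
    rw [hquot _ _ hden.ne', div_eq_mul_one_div, mul_comm]
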